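/- arXiv:1807.07563 — 6 statements merged into one kernel-verified Lean document; each statement's English description precedes it below -/
import Mathlib

section
/- Let A, B be n×n real symmetric matrices, a, b ∈ ℝ^n, c, d ∈ ℝ, and ε > 0. Assume the smallest eigenvalue λ_min(B) of B is negative and K > -λ_max(A)/λ_min(B), where λ_max(A) is the largest eigenvalue of A. If the system { x^T A x + 2 a^T x ≤ c − ε, x^T B x + 2 b^T x + d ≤ −ε/K } has no solution x ∈ ℝ^n, then the system { x^T A x + 2 a^T x ≤ c − 2ε, x^T B x + 2 b^T x + d ≤ 0 } also has no solution x ∈ ℝ^n. -/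
/-!
The key is to move a feasible point `x` of the second system along a unit eigenvector `v` of `B`
for the eigenvalue `μ = λ_min(B) < 0`. Along the line `x + t v`, the constraint `h` changes by
`2 t q + t² μ`, a concave quadratic in `t`, so for `K > 0` this change equals `-ε / K` both at
some `t ≥ 0` and at some `t ≤ 0` (`exists_root_with_sign`). Meanwhile `f + K h` changes by
`2 t (p + K q) + t² (vᵀAv + K μ)`, where `vᵀAv + K μ ≤ λ_max(A) + K μ < 0`
(`dotProduct_mulVec_le_iSup_eigenvalues`). Choosing the root whose sign makes the linear term
nonpositive, `f + K h` does not increase while `h` drops by exactly `ε / K`, so `f` grows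
by at most `ε`, and `x + t v` solves the first system. For `K ≤ 0`, the point `x` itself does.
-/

open Matrix

/-- The Rayleigh quotient bound `vᵀAv ≤ λ_max(A) vᵀv`. -/
lemma dotProduct_mulVec_le_iSup_eigenvalues {n : ℕ} {A : Matrix (Fin n) (Fin n) ℝ}
    (hA : A.IsHermitian) (v : Fin n → ℝ) :
    v ⬝ᵥ A *ᵥ v ≤ (⨆ i, hA.eigenvalues i) * (v ⬝ᵥ v) := by
  have key : ∀ u w : Fin n → ℝ, u ⬝ᵥ w =
      ∑ i, (u ⬝ᵥ ⇑(hA.eigenvectorBasis i)) * (w ⬝ᵥ ⇑(hA.eigenvectorBasis i)) := by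
    intro u w
    have := hA.eigenvectorBasis.sum_inner_mul_inner (WithLp.toLp 2 u) (WithLp.toLp 2 w)
    simp only [EuclideanSpace.inner_eq_star_dotProduct, star_trivial] at this
    rw [dotProduct_comm, ← this]
    refine Finset.sum_congr rfl fun i _ => ?_
    rw [dotProduct_comm u]
  have heig : ∀ i, (A *ᵥ v) ⬝ᵥ ⇑(hA.eigenvectorBasis i) =
      hA.eigenvalues i * (v ⬝ᵥ ⇑(hA.eigenvectorBasis i)) := by
    intro i
    have hT : Aᵀ = A := by simpa using hA.eq
    rw [dotProduct_comm, dotProduct_mulVec, ← mulVec_transpose, hT, hA.mulVec_eigenvectorBasis,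
      smul_dotProduct, smul_eq_mul, dotProduct_comm]
  rw [key v (A *ᵥ v), key v v, Finset.mul_sum]
  refine Finset.sum_le_sum fun i _ => ?_
  rw [heig]
  have h1 : hA.eigenvalues i ≤ ⨆ i, hA.eigenvalues i :=
    le_ciSup (Set.finite_range _).bddAbove i
  nlinarith [mul_self_nonneg (v ⬝ᵥ ⇑(hA.eigenvectorBasis i))]

/-- For `μ < 0`, the quadratic `μ t² + 2 q t` takes the value `-r ≤ 0` at some `t ≤ 0` and at
some `t ≥ 0`, hence at a point where `t * s ≤ 0`, for any prescribed `s`. -/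
lemma exists_root_with_sign {μ r : ℝ} (hμ : μ < 0) (hr : 0 ≤ r) (q s : ℝ) :
    ∃ t : ℝ, 2 * t * q + t ^ 2 * μ = -r ∧ t * s ≤ 0 := by
  have hD : 0 ≤ q ^ 2 - μ * r := by nlinarith [sq_nonneg q]
  have hsq := Real.sq_sqrt hD
  have hle : |q| ≤ √(q ^ 2 - μ * r) := Real.abs_le_sqrt (by nlinarith)
  obtain ⟨h1, h2⟩ := abs_le.mp hle
  set S := √(q ^ 2 - μ * r)
  have hμ0 : μ ≠ 0 := hμ.ne
  rcases le_total 0 s with hs | hs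
  · refine ⟨(-q + S) / μ, ?_, ?_⟩
    · field_simp
      linear_combination hsq
    · exact mul_nonpos_of_nonpos_of_nonneg (div_nonpos_of_nonneg_of_nonpos (by linarith) hμ.le) hs
  · refine ⟨(-q - S) / μ, ?_, ?_⟩
    · field_simp
      linear_combination hsq
    · exact mul_nonpos_of_nonneg_of_nonpos (div_nonneg_of_nonpos (by linarith) hμ.le) hs

lemma quadratic_add_smul {n : ℕ} {A : Matrix (Fin n) (Fin n) ℝ} (hA : A.IsHermitian)
    (a x v : Fin n → ℝ) (t : ℝ) :
    (x + t • v) ⬝ᵥ A *ᵥ (x + t • v) + 2 * (a ⬝ᵥ (x + t • v)) =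
      x ⬝ᵥ A *ᵥ x + 2 * (a ⬝ᵥ x) + 2 * t * (v ⬝ᵥ A *ᵥ x + a ⬝ᵥ v) + t ^ 2 * (v ⬝ᵥ A *ᵥ v) := by
  have hT : Aᵀ = A := by simpa using hA.eq
  have hsymm : x ⬝ᵥ A *ᵥ v = v ⬝ᵥ A *ᵥ x := by
    rw [dotProduct_mulVec, ← mulVec_transpose, hT, dotProduct_comm]
  simp only [mulVec_add, mulVec_smul, dotProduct_add, add_dotProduct, smul_dotProduct,
    dotProduct_smul, smul_eq_mul, hsymm]
  ring

/-- If `λ_min(B) < 0`, `K > -λ_max(A)/λ_min(B)` and the shifted system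
`xᵀAx + 2aᵀx ≤ c - ε, xᵀBx + 2bᵀx + d ≤ -ε/K` is infeasible, then the system
`xᵀAx + 2aᵀx ≤ c - 2ε, xᵀBx + 2bᵀx + d ≤ 0` is also infeasible. -/
theorem shifted_infeasibility {n : ℕ} (A B : Matrix (Fin n) (Fin n) ℝ)
    (hA : A.IsHermitian) (hB : B.IsHermitian)
    (a b : Fin n → ℝ) (c d ε K : ℝ) (hε : 0 < ε)
    (hBneg : (⨅ i, hB.eigenvalues i) < 0)
    (hK : K > -(⨆ i, hA.eigenvalues i) / (⨅ i, hB.eigenvalues i))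
    (hinfeas : ¬ ∃ x : Fin n → ℝ,
        x ⬝ᵥ A *ᵥ x + 2 * (a ⬝ᵥ x) ≤ c - ε ∧ x ⬝ᵥ B *ᵥ x + 2 * (b ⬝ᵥ x) + d ≤ -ε / K) :
    ¬ ∃ x : Fin n → ℝ,
        x ⬝ᵥ A *ᵥ x + 2 * (a ⬝ᵥ x) ≤ c - 2 * ε ∧ x ⬝ᵥ B *ᵥ x + 2 * (b ⬝ᵥ x) + d ≤ 0 := by
  rintro ⟨x, hf, hh⟩
  apply hinfeas
  rcases le_or_gt K 0 with hK0 | hK0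
  · -- Here `-ε / K ≥ 0`; this includes `K = 0`, where the quotient is `0` by convention.
    exact ⟨x, by linarith, hh.trans (div_nonneg_of_nonpos (by linarith) hK0)⟩
  -- An infimum over the empty family would be `0`, so `n > 0` and the infimum is attained.
  have hne : Nonempty (Fin n) := by
    by_contra h
    rw [not_nonempty_iff] at h
    rw [Real.iInf_of_isEmpty] at hBneg
    exact lt_irrefl _ hBneg
  obtain ⟨j, hj⟩ := exists_eq_ciInf_of_finite (f := hB.eigenvalues)
  rw [← hj] at hBneg hK
  set μ := hB.eigenvalues j
  set v : Fin n → ℝ := ⇑(hB.eigenvectorBasis j) with hv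
  have hvv : v ⬝ᵥ v = 1 := by
    have h := hB.eigenvectorBasis.inner_eq_one j
    simpa only [EuclideanSpace.inner_eq_star_dotProduct, star_trivial] using h
  have hBv : v ⬝ᵥ B *ᵥ v = μ := by
    rw [hv, hB.mulVec_eigenvectorBasis, dotProduct_smul, ← hv, hvv, smul_eq_mul, mul_one]
  have hAv := dotProduct_mulVec_le_iSup_eigenvalues hA v
  rw [hvv, mul_one] at hAv
  have hKμ : v ⬝ᵥ A *ᵥ v + K * μ ≤ 0 := by
    have := (div_lt_iff_of_neg hBneg).mp hK
    linarith
  obtain ⟨t, ht, hts⟩ := exists_root_with_sign hBneg (div_pos hε hK0).le (v ⬝ᵥ B *ᵥ x + b ⬝ᵥ v)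
    ((v ⬝ᵥ A *ᵥ x + a ⬝ᵥ v) + K * (v ⬝ᵥ B *ᵥ x + b ⬝ᵥ v))
  refine ⟨x + t • v, ?_, ?_⟩
  · rw [quadratic_add_smul hA]
    have h1 : K * (2 * t * (v ⬝ᵥ B *ᵥ x + b ⬝ᵥ v) + t ^ 2 * μ) = -ε := by
      rw [ht]; field_simp
    have h2 := mul_nonpos_of_nonneg_of_nonpos (sq_nonneg t) hKμ
    linarith
  · rw [quadratic_add_smul hB, hBv, neg_div]
    linarith
end

section
/- Let A, B be n×n real symmetric matrices, a, b ∈ ℝ^n, d ∈ ℝ, ν ≥ 0, and γ > 0. Suppose A + ν B ⪰ γ I. Then for every x ∈ ℝ^n with x^T B x + 2 b^T x + d ≤ 0, one has x^T A x + 2 a^T x ≥ d ν − ‖a + ν b‖²/γ, where ‖·‖ is the Euclidean norm. In particular, d ν − ‖a + ν b‖²/γ is a lower bound on the optimal value of minimizing x^T A x + 2 a^T x subject to x^T B x + 2 b^T x + d ≤ 0. -/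
/-!
Weak duality. For feasible `x` and `ν ≥ 0`, with `f` the objective, `h` the constraint function and
`c = a + ν b`, one has `f x ≥ f x + ν * h x ≥ γ‖x‖² + 2 cᵀx + dν`, the second step by
`A + ν B ⪰ γ I`. The last expression is at least `dν - ‖c‖²/γ` because `‖γ x + c‖² ≥ 0`.
-/

open Matrix

/-- Weak-duality lower bound for the GTRS: if `A + ν B ⪰ γ I` with `ν ≥ 0`, `γ > 0`, then every
point `x` feasible for `xᵀBx + 2bᵀx + d ≤ 0` satisfies
`xᵀAx + 2aᵀx ≥ dν − ‖a + νb‖²/γ`. -/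
theorem dual_lower_bound {n : ℕ} (A B : Matrix (Fin n) (Fin n) ℝ)
    (hA : A.IsSymm) (hB : B.IsSymm) (a b : Fin n → ℝ) (d ν γ : ℝ)
    (hν : 0 ≤ ν) (hγ : 0 < γ)
    (hpsd : (A + ν • B - γ • (1 : Matrix (Fin n) (Fin n) ℝ)).PosSemidef) :
    ∀ x : Fin n → ℝ, x ⬝ᵥ B *ᵥ x + 2 * (b ⬝ᵥ x) + d ≤ 0 →
      x ⬝ᵥ A *ᵥ x + 2 * (a ⬝ᵥ x) ≥ d * ν - ((a + ν • b) ⬝ᵥ (a + ν • b)) / γ := by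
  intro x hx
  have hquad := hpsd.dotProduct_mulVec_nonneg x
  simp only [star_trivial, sub_mulVec, add_mulVec, smul_mulVec, one_mulVec, dotProduct_sub,
    dotProduct_add, dotProduct_smul, smul_eq_mul] at hquad
  have hlin : (a + ν • b) ⬝ᵥ x = a ⬝ᵥ x + ν * (b ⬝ᵥ x) := by
    simp [add_dotProduct, smul_dotProduct]
  generalize a + ν • b = c at hlin ⊢
  have hsq : 0 ≤ γ * (γ * (x ⬝ᵥ x) + 2 * (c ⬝ᵥ x)) + c ⬝ᵥ c := by
    have h : 0 ≤ (γ • x + c) ⬝ᵥ (γ • x + c) :=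
      Finset.sum_nonneg fun i _ => mul_self_nonneg _
    simp only [dotProduct_add, add_dotProduct, smul_dotProduct, dotProduct_smul, smul_eq_mul,
      dotProduct_comm x c] at h
    linarith
  have hdiv : -(c ⬝ᵥ c / γ) ≤ γ * (x ⬝ᵥ x) + 2 * (c ⬝ᵥ x) := by
    rw [← neg_div, div_le_iff₀ hγ]
    linarith
  have hmul := mul_nonpos_of_nonneg_of_nonpos hν hx
  linarith
end

section
/- Let A, B be n×n real symmetric matrices, a, b ∈ ℝ^n, d ∈ ℝ. Suppose ν₀ ≥ 0 and γ > 0 are such that A + ν₀ B ⪰ γ I, and suppose x* ∈ ℝ^n satisfies (x*)^T B x* + 2 b^T x* + d ≤ 0 and (x*)^T A x* + 2 a^T x* ≤ u for some real u. Then ‖x*‖ ≤ R, where R = ‖a + ν₀ b‖/γ + √( ‖a + ν₀ b‖²/γ² + (u − ν₀ d)/γ ). -/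
/-! Adding `ν₀ ≥ 0` times the constraint to the objective and using `A + ν₀ B ⪰ γ I` together with
Cauchy–Schwarz for `c = a + ν₀ b` gives the scalar inequality `γ r² - 2 ‖c‖ r ≤ u - ν₀ d` for
`r = ‖x*‖`. Completing the square, `(r - ‖c‖/γ)² ≤ ‖c‖²/γ² + (u - ν₀ d)/γ`, and taking square
roots yields the bound. -/

open Matrix

theorem neg_sqrt_mul_sqrt_le_dotProduct {n : ℕ} (v w : Fin n → ℝ) :
    -(Real.sqrt (v ⬝ᵥ v) * Real.sqrt (w ⬝ᵥ w)) ≤ v ⬝ᵥ w := by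
  have hv : 0 ≤ v ⬝ᵥ v := Finset.sum_nonneg fun i _ => mul_self_nonneg (v i)
  have h : (v ⬝ᵥ w) ^ 2 ≤ (v ⬝ᵥ v) * (w ⬝ᵥ w) := by
    have := Finset.sum_mul_sq_le_sq_mul_sq Finset.univ v w
    simpa only [dotProduct, ← pow_two] using this
  rw [← Real.sqrt_mul hv]
  exact (abs_le.mp (Real.abs_le_sqrt h)).1

/-- If `A + ν₀ B ⪰ γ I` with `ν₀ ≥ 0`, `γ > 0`, then any point `x*` feasible for the GTRS
constraint whose objective value is at most `u` satisfies `‖x*‖ ≤ R` with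
`R = ‖a + ν₀ b‖/γ + √(‖a + ν₀ b‖²/γ² + (u − ν₀ d)/γ)`. -/
theorem solution_norm_bound {n : ℕ} (A B : Matrix (Fin n) (Fin n) ℝ)
    (hA : A.IsSymm) (hB : B.IsSymm) (a b : Fin n → ℝ) (d ν₀ γ u : ℝ)
    (hν₀ : 0 ≤ ν₀) (hγ : 0 < γ)
    (hpsd : (A + ν₀ • B - γ • (1 : Matrix (Fin n) (Fin n) ℝ)).PosSemidef)
    (xs : Fin n → ℝ)
    (hfeas : xs ⬝ᵥ B *ᵥ xs + 2 * (b ⬝ᵥ xs) + d ≤ 0)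
    (hobj : xs ⬝ᵥ A *ᵥ xs + 2 * (a ⬝ᵥ xs) ≤ u) :
    Real.sqrt (xs ⬝ᵥ xs) ≤ Real.sqrt ((a + ν₀ • b) ⬝ᵥ (a + ν₀ • b)) / γ +
      Real.sqrt (((a + ν₀ • b) ⬝ᵥ (a + ν₀ • b)) / γ ^ 2 + (u - ν₀ * d) / γ) := by
  have hq : γ * (xs ⬝ᵥ xs) ≤ xs ⬝ᵥ A *ᵥ xs + ν₀ * (xs ⬝ᵥ B *ᵥ xs) := by
    have h := hpsd.dotProduct_mulVec_nonneg xs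
    simp only [star_trivial, sub_mulVec, add_mulVec, smul_mulVec, one_mulVec, dotProduct_sub,
      dotProduct_add, dotProduct_smul, smul_eq_mul] at h
    linarith
  have hcs := neg_sqrt_mul_sqrt_le_dotProduct (a + ν₀ • b) xs
  have hc : (a + ν₀ • b) ⬝ᵥ xs = a ⬝ᵥ xs + ν₀ * (b ⬝ᵥ xs) := by
    simp only [add_dotProduct, smul_dotProduct, smul_eq_mul]
  rw [hc] at hcs
  have hx : Real.sqrt (xs ⬝ᵥ xs) ^ 2 = xs ⬝ᵥ xs :=
    Real.sq_sqrt (Finset.sum_nonneg fun i _ => mul_self_nonneg (xs i))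
  have hcc : Real.sqrt ((a + ν₀ • b) ⬝ᵥ (a + ν₀ • b)) ^ 2 = (a + ν₀ • b) ⬝ᵥ (a + ν₀ • b) :=
    Real.sq_sqrt (Finset.sum_nonneg fun i _ => mul_self_nonneg ((a + ν₀ • b) i))
  have hf := mul_le_mul_of_nonneg_left hfeas hν₀
  rw [← hx] at hq
  nth_rewrite 2 [← hcc]
  generalize Real.sqrt (xs ⬝ᵥ xs) = r at *
  generalize Real.sqrt ((a + ν₀ • b) ⬝ᵥ (a + ν₀ • b)) = s at *
  have hs : γ * r ^ 2 - 2 * (s * r) ≤ u - ν₀ * d := by linarith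
  have hsq : (r - s / γ) ^ 2 ≤ s ^ 2 / γ ^ 2 + (u - ν₀ * d) / γ := by
    have h1 : (r - s / γ) ^ 2 = s ^ 2 / γ ^ 2 + (γ * r ^ 2 - 2 * (s * r)) / γ := by
      field_simp
      ring
    rw [h1]
    gcongr
  have := (abs_le.mp (Real.abs_le_sqrt hsq)).2
  linarith
end

section
/- Let ξ > 0, ϖ ≤ −ξ/2, let y ∈ ℝ^n be a unit vector, b ∈ ℝ^n, d ∈ ℝ, and let α ∈ ℝ be a root of ϖ α² + 2 (b^T y) α + d = 0. Then |α| ≤ 4‖b‖/ξ + √(2|d|/ξ), where ‖·‖ is the Euclidean norm. -/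
/-!
Cauchy–Schwarz bounds the linear coefficient by `2‖b‖`, so the root equation and `ϖ ≤ -ξ/2` give
`|α|² ≤ P|α| + s²` with `P = 4‖b‖/ξ` and `s = √(2|d|/ξ)`. Any nonnegative number satisfying this
quadratic inequality is at most `P + s`.
-/

open Matrix

/-- If `ϖ ≤ -ξ/2 < 0`, `y` is a unit vector and `α` is a root of `ϖ α² + 2(bᵀy)α + d = 0`,
then `|α| ≤ 4‖b‖/ξ + √(2|d|/ξ)` where `‖·‖` is the Euclidean norm. -/
theorem root_magnitude_bound {n : ℕ} (ξ ϖ : ℝ) (hξ : 0 < ξ) (hϖ : ϖ ≤ -ξ / 2)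
    (y : Fin n → ℝ) (hy : y ⬝ᵥ y = 1) (b : Fin n → ℝ) (d : ℝ) (α : ℝ)
    (hα : ϖ * α ^ 2 + 2 * (b ⬝ᵥ y) * α + d = 0) :
    |α| ≤ 4 * Real.sqrt (b ⬝ᵥ b) / ξ + Real.sqrt (2 * |d| / ξ) := by
  -- Cauchy–Schwarz and the unit length of `y` give `|bᵀy| ≤ ‖b‖`.
  have hcs : |b ⬝ᵥ y| ≤ Real.sqrt (b ⬝ᵥ b) := by
    apply Real.abs_le_sqrt
    have h := Finset.sum_mul_sq_le_sq_mul_sq Finset.univ b y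
    simp only [dotProduct] at hy ⊢
    simp only [pow_two] at h ⊢
    rwa [hy, mul_one] at h
  set B := Real.sqrt (b ⬝ᵥ b)
  have hquad : ξ / 2 * |α| ^ 2 ≤ 2 * B * |α| + |d| := by
    have h1 : (b ⬝ᵥ y) * α ≤ B * |α| :=
      (le_abs_self _).trans (by rw [abs_mul]; gcongr)
    have h2 : (ϖ + ξ / 2) * α ^ 2 ≤ 0 :=
      mul_nonpos_of_nonpos_of_nonneg (by linarith) (sq_nonneg α)
    rw [sq_abs]
    linarith [le_abs_self d]
  set s := Real.sqrt (2 * |d| / ξ)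
  have hs : s ^ 2 = 2 * |d| / ξ := Real.sq_sqrt (by positivity)
  have hs0 : 0 ≤ s := Real.sqrt_nonneg _
  have hP0 : 0 ≤ 4 * B / ξ := by positivity
  have hmonic : |α| ^ 2 ≤ 4 * B / ξ * |α| + s ^ 2 := by
    have h : 4 * B / ξ * |α| + 2 * |d| / ξ = (2 * B * |α| + |d|) / (ξ / 2) := by
      field_simp
      ring
    rw [hs, h, le_div_iff₀ (by positivity)]
    linarith
  -- If `|α| > P + s` with `P = 4‖b‖/ξ`, then `|α|² > P|α| + s|α| ≥ P|α| + s²`.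
  by_contra! hlt
  nlinarith [mul_nonneg hs0 (show 0 ≤ |α| - s by linarith),
    mul_pos (show 0 < |α| by linarith) (sub_pos.mpr hlt)]
end

section
/- Let X be an n×n real positive semidefinite matrix admitting a decomposition X = Σ_{i=1}^r x_i x_i^T with x_i ∈ ℝ^n, and let M be an n×n real symmetric matrix with M • X ≥ a, where M • X = trace(M X) and a ∈ ℝ. Then there exist vectors y_1, …, y_r ∈ ℝ^n such that X = Σ_{i=1}^r y_i y_i^T and y_i^T M y_i ≥ a/r for all i = 1, …, r. -/
open Matrix

/-!
Write `q v = vᵀ M v` and `c = a / r`. Since `∑ q (xᵢ) = trace (M X) ≥ r c`, a decomposition with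
some `q (xᵢ) < c` also has some `q (xⱼ) > c`. Rotating the pair `(xᵢ, xⱼ)` by an angle `θ` does not
change `xᵢ xᵢᵀ + xⱼ xⱼᵀ`, and by the intermediate value theorem some `θ ∈ [0, π/2]` makes
`q (xᵢ) = c` (`exists_rotation`). Such a step strictly decreases the number of indices with
`q ≠ c`, so the process terminates (`exists_decomposition`).
-/

lemma trace_mul_vecMulVec_self {n : ℕ} (M : Matrix (Fin n) (Fin n) ℝ) (v : Fin n → ℝ) :
    trace (M * vecMulVec v v) = v ⬝ᵥ M *ᵥ v := by
  rw [mul_vecMulVec, trace_vecMulVec, dotProduct_comm]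

lemma sum_eq_of_pair {ι A : Type*} [Fintype ι] [DecidableEq ι] [AddCommGroup A] {f g : ι → A}
    {i j : ι} (hij : i ≠ j) (hoff : ∀ k, k ≠ i ∧ k ≠ j → f k = g k)
    (hpair : f i + f j = g i + g j) : ∑ k, f k = ∑ k, g k := by
  rw [← sub_eq_zero, ← Finset.sum_sub_distrib,
    Fintype.sum_eq_add i j hij (fun k hk => sub_eq_zero.2 (hoff k hk)),
    sub_add_sub_comm, hpair, sub_self]

/-- A pair `u, v` on which the quadratic form of `M` lies below and above `c` can be rotated so that
the first vector takes the value `c` exactly, with `u uᵀ + v vᵀ` unchanged. -/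
lemma exists_rotation {n : ℕ} (M : Matrix (Fin n) (Fin n) ℝ) (c : ℝ) (u v : Fin n → ℝ)
    (hu : u ⬝ᵥ M *ᵥ u ≤ c) (hv : c ≤ v ⬝ᵥ M *ᵥ v) :
    ∃ u' v' : Fin n → ℝ, vecMulVec u' u' + vecMulVec v' v' = vecMulVec u u + vecMulVec v v ∧
      u' ⬝ᵥ M *ᵥ u' = c := by
  let w : ℝ → Fin n → ℝ := fun θ => Real.cos θ • u + Real.sin θ • v
  have hcont : Continuous fun θ => w θ ⬝ᵥ M *ᵥ w θ := by
    have hw : Continuous w := by fun_prop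
    exact hw.dotProduct (continuous_const.matrix_mulVec hw)
  obtain ⟨θ, -, hθ⟩ := intermediate_value_Icc Real.pi_div_two_pos.le hcont.continuousOn
    (show c ∈ Set.Icc _ _ by simpa [w] using ⟨hu, hv⟩)
  refine ⟨w θ, -Real.sin θ • u + Real.cos θ • v, ?_, hθ⟩
  ext k l
  simp only [w, Matrix.add_apply, vecMulVec_apply, Pi.add_apply, Pi.smul_apply, smul_eq_mul]
  linear_combination (u k * u l + v k * v l) * Real.sin_sq_add_cos_sq θ

/-- The termination argument, by induction on the number of indices whose value differs
from `c`. -/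
lemma exists_decomposition {n r : ℕ} (X M : Matrix (Fin n) (Fin n) ℝ) (c : ℝ)
    (hMX : r * c ≤ trace (M * X)) (N : ℕ) :
    ∀ x : Fin r → Fin n → ℝ, X = ∑ i, vecMulVec (x i) (x i) →
      (Finset.univ.filter fun i => x i ⬝ᵥ M *ᵥ x i ≠ c).card ≤ N →
      ∃ y : Fin r → Fin n → ℝ, X = ∑ i, vecMulVec (y i) (y i) ∧
        ∀ i, c ≤ y i ⬝ᵥ M *ᵥ y i := by
  induction N with
  | zero =>
    intro x hx hN
    refine ⟨x, hx, fun i => ?_⟩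
    by_contra! h
    have hmem : i ∈ Finset.univ.filter fun i => x i ⬝ᵥ M *ᵥ x i ≠ c := by simp [h.ne]
    exact (Finset.card_pos.2 ⟨i, hmem⟩).not_ge hN
  | succ N ih =>
    intro x hx hN
    by_cases hall : ∀ i, c ≤ x i ⬝ᵥ M *ᵥ x i
    · exact ⟨x, hx, hall⟩
    push Not at hall
    obtain ⟨i, hi⟩ := hall
    have hsum : ∑ _k : Fin r, c ≤ ∑ k, x k ⬝ᵥ M *ᵥ x k := by
      simpa [hx, Finset.mul_sum, trace_sum, trace_mul_vecMulVec_self] using hMX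
    obtain ⟨j, hj⟩ : ∃ j, c < x j ⬝ᵥ M *ᵥ x j := by
      by_contra! h
      exact (Finset.sum_lt_sum (fun k _ => h k) ⟨i, Finset.mem_univ i, hi⟩).not_ge hsum
    have hij : i ≠ j := by
      rintro rfl
      exact hi.not_gt hj
    obtain ⟨u, v, huv, hu⟩ := exists_rotation M c (x i) (x j) hi.le hj.le
    let y := Function.update (Function.update x j v) i u
    have hyi : y i = u := by simp [y]
    have hyj : y j = v := by simp [y, hij.symm]
    have hyk : ∀ k, k ≠ i ∧ k ≠ j → y k = x k := fun k hk => by simp [y, hk.1, hk.2]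
    refine ih y ?_ (Nat.le_of_lt_succ (lt_of_lt_of_le (Finset.card_lt_card ?_) hN))
    · rw [hx]
      exact sum_eq_of_pair hij (fun k hk => by rw [hyk k hk]) (by rw [hyi, hyj, huv])
    · -- `i` leaves the exceptional set, and `j` belonged to it already.
      refine (Finset.ssubset_iff_of_subset fun k hk => ?_).2
        ⟨i, by simp [hi.ne], by simp [hyi, hu]⟩
      simp only [Finset.mem_filter, Finset.mem_univ, true_and] at hk ⊢
      by_cases hki : k = i
      · rw [hki]
        exact hi.ne
      by_cases hkj : k = j
      · rw [hkj]
        exact hj.ne'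
      rwa [hyk k ⟨hki, hkj⟩] at hk

/-- **Sturm–Zhang matrix decomposition (rotation).** Given a rank-`r` decomposition
`X = Σᵢ xᵢ xᵢᵀ` of a positive semidefinite matrix `X` and a symmetric matrix `M` with
`M • X = trace(M X) ≥ a`, there is a decomposition `X = Σᵢ yᵢ yᵢᵀ` with `yᵢᵀ M yᵢ ≥ a/r`
for every `i`. -/
theorem sturm_zhang_rotation {n r : ℕ} (X : Matrix (Fin n) (Fin n) ℝ) (hX : X.PosSemidef)
    (x : Fin r → (Fin n → ℝ)) (hdec : X = ∑ i, Matrix.vecMulVec (x i) (x i))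
    (M : Matrix (Fin n) (Fin n) ℝ) (hM : M.IsSymm) (a : ℝ)
    (hMX : Matrix.trace (M * X) ≥ a) :
    ∃ y : Fin r → (Fin n → ℝ), X = ∑ i, Matrix.vecMulVec (y i) (y i) ∧
      ∀ i : Fin r, (y i) ⬝ᵥ M *ᵥ (y i) ≥ a / (r : ℝ) := by
  rcases Nat.eq_zero_or_pos r with rfl | hr
  · exact ⟨x, hdec, fun i => i.elim0⟩
  have hr' : (r : ℝ) ≠ 0 := by positivity
  exact exists_decomposition X M (a / r) (by rwa [mul_div_cancel₀ a hr']) _ x hdec le_rfl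
end

section
/- Let A, B be n×n real symmetric matrices, a, b ∈ ℝ^n, c, d ∈ ℝ. Suppose z̃ ∈ ℝ^n satisfies z̃^T A z̃ ≤ −η and z̃^T B z̃ ≤ −η′ for some η, η′ > 0, and let α be a real number with 0 < α ≤ 1, α ≤ η/(|2 a^T z̃| + |c|), and α ≤ η′/(|2 b^T z̃| + |d|) (interpreting a bound with zero denominator as vacuous). Then x = z̃/α satisfies x^T A x + 2 a^T x ≤ c and x^T B x + 2 b^T x + d ≤ 0. -/
open Matrix

/-!
Substituting `x = z̃/α` and multiplying by `α²` turns each constraint into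
`z̃ᵀMz̃ + 2α mᵀz̃ + α² e ≤ 0`, with `(M, m, e) = (A, a, -c)` or `(B, b, d)`. The quadratic term is at
most `-η` (resp. `-η'`), and since `0 < α ≤ 1` the other two are at most `α (|2mᵀz̃| + |e|)`, which
the choice of `α` makes at most `η` (resp. `η'`). `scaled_quadratic_nonpos` is this estimate.
-/

/-- The scalar core: `q + 2αp + α²e ≤ -η + α(|2p| + |e|) ≤ 0`, where `α² ≤ α` is what bounds
the constant term; dividing by `α²` gives the claim. -/
lemma scaled_quadratic_nonpos {q p e η α : ℝ} (hq : q ≤ -η) (hα0 : 0 < α) (hα1 : α ≤ 1)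
    (h : α * (|2 * p| + |e|) ≤ η) : α⁻¹ * (α⁻¹ * q) + 2 * (α⁻¹ * p) + e ≤ 0 := by
  have hp : α * (2 * p) ≤ α * |2 * p| := mul_le_mul_of_nonneg_left (le_abs_self _) hα0.le
  have he : α * (α * e) ≤ α * |e| := by
    refine mul_le_mul_of_nonneg_left ?_ hα0.le
    calc α * e ≤ α * |e| := mul_le_mul_of_nonneg_left (le_abs_self _) hα0.le
      _ ≤ |e| := mul_le_of_le_one_left (abs_nonneg e) hα1
  have hsum : q + α * (2 * p) + α * (α * e) ≤ 0 := by linarith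
  have hfactor : α⁻¹ * (α⁻¹ * q) + 2 * (α⁻¹ * p) + e
      = α⁻¹ ^ 2 * (q + α * (2 * p) + α * (α * e)) := by
    field_simp
  rw [hfactor]
  exact mul_nonpos_of_nonneg_of_nonpos (by positivity) hsum

/-- Recovery of a feasible point when the first coordinate of the homogenized solution vanishes:
if `z̃ᵀAz̃ ≤ −η`, `z̃ᵀBz̃ ≤ −η′` with `η, η′ > 0` and `0 < α ≤ 1` satisfies
`α(|2aᵀz̃| + |c|) ≤ η` and `α(|2bᵀz̃| + |d|) ≤ η′` (which encodes
`α ≤ η/(|2aᵀz̃|+|c|)` and `α ≤ η′/(|2bᵀz̃|+|d|)`, vacuous for a zero denominator),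
then `x = z̃/α` satisfies `xᵀAx + 2aᵀx ≤ c` and `xᵀBx + 2bᵀx + d ≤ 0`. -/
theorem dehomogenize_zero_first_coord {n : ℕ} (A B : Matrix (Fin n) (Fin n) ℝ)
    (hA : A.IsSymm) (hB : B.IsSymm) (a b : Fin n → ℝ) (c d : ℝ)
    (zt : Fin n → ℝ) (η η' : ℝ) (hη : 0 < η) (hη' : 0 < η')
    (hzA : zt ⬝ᵥ A *ᵥ zt ≤ -η) (hzB : zt ⬝ᵥ B *ᵥ zt ≤ -η')
    (α : ℝ) (hα0 : 0 < α) (hα1 : α ≤ 1)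
    (hαa : α * (|2 * (a ⬝ᵥ zt)| + |c|) ≤ η)
    (hαb : α * (|2 * (b ⬝ᵥ zt)| + |d|) ≤ η') :
    (α⁻¹ • zt) ⬝ᵥ A *ᵥ (α⁻¹ • zt) + 2 * (a ⬝ᵥ (α⁻¹ • zt)) ≤ c ∧
      (α⁻¹ • zt) ⬝ᵥ B *ᵥ (α⁻¹ • zt) + 2 * (b ⬝ᵥ (α⁻¹ • zt)) + d ≤ 0 := by
  simp only [mulVec_smul, smul_dotProduct, dotProduct_smul, smul_eq_mul]
  constructor
  · -- The bound on `α` only involves `|c|`, so the constant term may be taken to be `-c`.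
    have := scaled_quadratic_nonpos (e := -c) hzA hα0 hα1 (by rwa [abs_neg])
    linarith
  · exact scaled_quadratic_nonpos hzB hα0 hα1 hαb
end
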